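/- arXiv:2604.01061 — 2 statements merged into one kernel-verified Lean document; each statement's English description precedes it below -/
import Mathlib

section
/- Let S be a subset of chambers of a hyperplane arrangement 𝓗 in general position in ℝ^d, let e ∈ [n], and set S⁺ := {C ∈ S : C ⊂ H_e⁺}. Let A ∈ supp(S) with e ∉ A. Then every connected component c of T_S(A ∪ {e}) lies on the boundary of exactly one connected component of T_{S⁺}(A). -/
open Set Topology

noncomputable section

/-- A hyperplane arrangement of `n` affine hyperplanes in `ℝ^d`, given by
nonzero normal vectors and offsets: the `i`-th hyperplane is
`{x | ∑ j, normal i j * x j = offset i}`. -/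
structure Arrangement (d n : ℕ) where
  normal : Fin n → (Fin d → ℝ)
  offset : Fin n → ℝ
  normal_ne : ∀ i, normal i ≠ 0

/-- The thickening (regular open hull) `T_S` of a set `S` of chambers. -/
def thickening {d : ℕ} (S : Set (Set (Fin d → ℝ))) : Set (Fin d → ℝ) :=
  interior (closure (⋃ C ∈ S, C))

/-- The set of connected components of a subset `X` of a topological space. -/
def connComps {α : Type*} [TopologicalSpace α] (X : Set α) : Set (Set α) :=
  {c | ∃ x ∈ X, c = connectedComponentIn X x}

namespace Arrangement

variable {d n : ℕ} (𝓗 : Arrangement d n)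

/-- The `i`-th hyperplane of the arrangement. -/
def H (i : Fin n) : Set (Fin d → ℝ) := {x | ∑ j, 𝓗.normal i j * x j = 𝓗.offset i}

/-- The positive open half-space determined by the `i`-th hyperplane. -/
def pos (i : Fin n) : Set (Fin d → ℝ) := {x | 𝓗.offset i < ∑ j, 𝓗.normal i j * x j}

/-- The negative open half-space determined by the `i`-th hyperplane. -/
def neg (i : Fin n) : Set (Fin d → ℝ) := {x | ∑ j, 𝓗.normal i j * x j < 𝓗.offset i}

/-- The complement of the union of the hyperplanes. -/
def free : Set (Fin d → ℝ) := {x | ∀ i, x ∉ 𝓗.H i}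

/-- The chambers: connected components of the complement of the hyperplanes. -/
def chambers : Set (Set (Fin d → ℝ)) :=
  {C | ∃ x ∈ 𝓗.free, C = connectedComponentIn 𝓗.free x}

/-- General position: the normals of any `≤ d` hyperplanes are linearly independent
(so that their intersection is an affine subspace of the right dimension), and no
`d+1` hyperplanes have a common point. -/
def GeneralPosition : Prop :=
  (∀ A : Finset (Fin n), A.card ≤ d →
      LinearIndependent ℝ (fun i : A => 𝓗.normal i.1)) ∧
  (∀ A : Finset (Fin n), A.card = d + 1 → (⋂ i ∈ A, 𝓗.H i) = ∅)

/-- Hyperplane `e` separates `C` from `C'`. -/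
def Separates (e : Fin n) (C C' : Set (Fin d → ℝ)) : Prop :=
  (C ⊆ 𝓗.pos e ∧ C' ⊆ 𝓗.neg e) ∨ (C ⊆ 𝓗.neg e ∧ C' ⊆ 𝓗.pos e)

/-- Adjacency in the chamber graph: two chambers are adjacent iff they are separated
by exactly one hyperplane (equivalently, share a common facet). -/
def Adj (C C' : Set (Fin d → ℝ)) : Prop :=
  C ∈ 𝓗.chambers ∧ C' ∈ 𝓗.chambers ∧ ∃! e : Fin n, 𝓗.Separates e C C'

/-- The edge boundary of a set `S` of chambers, encoded as the set of ordered pairs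
`(C, C')` of adjacent chambers with `C ∈ S` and `C' ∉ S` (each boundary edge is thus
counted exactly once). -/
def edgeBoundary (S : Set (Set (Fin d → ℝ))) :
    Set ((Set (Fin d → ℝ)) × (Set (Fin d → ℝ))) :=
  {q | q.1 ∈ S ∧ q.2 ∉ S ∧ 𝓗.Adj q.1 q.2}

/-- The stratum `T_S(A) = T_S ∩ L_A`. -/
def stratum (S : Set (Set (Fin d → ℝ))) (A : Finset (Fin n)) : Set (Fin d → ℝ) :=
  thickening S ∩ ⋂ i ∈ A, 𝓗.H i

/-- The support of `S`: those `A` with nonempty stratum. -/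
def supp (S : Set (Set (Fin d → ℝ))) : Set (Finset (Fin n)) :=
  {A | (𝓗.stratum S A).Nonempty}

/-- `H_f` bounds the stratum `T_S(A)`: the stratum lies entirely in one of the open
half-spaces of `H_f`, and `H_f` meets the closure of the stratum within `L_A`. -/
def Bounds (f : Fin n) (S : Set (Set (Fin d → ℝ))) (A : Finset (Fin n)) : Prop :=
  (𝓗.stratum S A ⊆ 𝓗.pos f ∨ 𝓗.stratum S A ⊆ 𝓗.neg f) ∧
  (𝓗.H f ∩ closure (𝓗.stratum S A) ∩ ⋂ i ∈ A, 𝓗.H i).Nonempty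

/-- `S` is strata-connected if every nonempty stratum is connected. -/
def StrataConnected (S : Set (Set (Fin d → ℝ))) : Prop :=
  ∀ A ∈ 𝓗.supp S, IsConnected (𝓗.stratum S A)

end Arrangement

/-- The generalized binomial coefficient `C(x, i) = x(x-1)⋯(x-i+1)/i!`. -/
noncomputable def gchoose (x : ℝ) (i : ℕ) : ℝ :=
  (∏ j ∈ Finset.range i, (x - j)) / (Nat.factorial i)

/-!
Both strata are cut out of the open set `T = T_S`: one is `X = T ∩ L_A ∩ H_e`, and since an open
half-space is regular open and contains or misses each chamber, the other is
`Y = T ∩ L_A ∩ H_e⁺`. Points of `X` are limits of points of `Y`, because `L_A` crosses `H_e`; and a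
convex neighbourhood of a point of `X` inside `T` meets `Y` in a convex set. Hence near a point of
`X` only one component of `Y` is visible, and this component is locally constant along `X`, so it
is constant on each component of `X`.
-/

section ConnComps

variable {α : Type*} [TopologicalSpace α] {C Y c U : Set α} {x : α}

theorem subset_of_mem_connComps (hc : c ∈ connComps Y) : c ⊆ Y := by
  obtain ⟨x, -, rfl⟩ := hc
  exact connectedComponentIn_subset Y x

theorem isPreconnected_of_mem_connComps (hc : c ∈ connComps Y) : IsPreconnected c := by
  obtain ⟨x, -, rfl⟩ := hc
  exact isPreconnected_connectedComponentIn

theorem nonempty_of_mem_connComps (hc : c ∈ connComps Y) : c.Nonempty := by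
  obtain ⟨x, hx, rfl⟩ := hc
  exact ⟨x, mem_connectedComponentIn hx⟩

theorem eq_connectedComponentIn_of_mem_connComps (hc : c ∈ connComps Y) (hx : x ∈ c) :
    c = connectedComponentIn Y x := by
  obtain ⟨y, -, rfl⟩ := hc
  exact connectedComponentIn_eq hx

theorem mem_closure_iff_inter_subset_of_mem_connComps (hc : c ∈ connComps Y)
    (hx : x ∈ closure Y) (hU : IsOpen U) (hxU : x ∈ U) (hUY : IsPreconnected (U ∩ Y)) :
    x ∈ closure c ↔ U ∩ Y ⊆ c := by
  refine ⟨fun hxc => ?_, fun h => closure_mono h (hU.inter_closure ⟨hxU, hx⟩)⟩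
  obtain ⟨y, hyU, hyc⟩ := mem_closure_iff.1 hxc U hU hxU
  rw [eq_connectedComponentIn_of_mem_connComps hc hyc]
  exact hUY.subset_connectedComponentIn ⟨hyU, subset_of_mem_connComps hc hyc⟩ inter_subset_right

theorem existsUnique_mem_connComps_mem_closure (hx : x ∈ closure Y) (hU : IsOpen U) (hxU : x ∈ U)
    (hUY : IsPreconnected (U ∩ Y)) : ∃! c, c ∈ connComps Y ∧ x ∈ closure c := by
  have closure_iff {c : Set α} (hc : c ∈ connComps Y) : x ∈ closure c ↔ U ∩ Y ⊆ c :=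
    mem_closure_iff_inter_subset_of_mem_connComps hc hx hU hxU hUY
  obtain ⟨y, hy⟩ : (U ∩ Y).Nonempty := mem_closure_iff.1 hx U hU hxU
  have hcomp : connectedComponentIn Y y ∈ connComps Y := ⟨y, hy.2, rfl⟩
  refine ⟨connectedComponentIn Y y, ⟨hcomp, (closure_iff hcomp).2 ?_⟩, fun c ⟨hc, hxc⟩ => ?_⟩
  · exact hUY.subset_connectedComponentIn hy inter_subset_right
  · exact eq_connectedComponentIn_of_mem_connComps hc ((closure_iff hc).1 hxc hy)

theorem subset_closure_of_mem_connComps (hC : IsPreconnected C) (hCY : C ⊆ closure Y)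
    (hloc : ∀ x ∈ C, ∃ U, IsOpen U ∧ x ∈ U ∧ IsPreconnected (U ∩ Y)) (hc : c ∈ connComps Y)
    (hx : x ∈ C) (hxc : x ∈ closure c) : C ⊆ closure c := by
  intro y hy
  refine (hC.induction₂ (fun a b => a ∈ closure c ↔ b ∈ closure c) (fun a ha => ?_)
    (fun _ _ _ _ _ _ => Iff.trans) (fun _ _ _ _ => Iff.symm) hx hy).1 hxc
  obtain ⟨U, hU, haU, hUY⟩ := hloc a ha
  have closure_iff {b : α} (hb : b ∈ C) (hbU : b ∈ U) : b ∈ closure c ↔ U ∩ Y ⊆ c :=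
    mem_closure_iff_inter_subset_of_mem_connComps hc (hCY hb) hU hbU hUY
  filter_upwards [self_mem_nhdsWithin, mem_nhdsWithin_of_mem_nhds (hU.mem_nhds haU)] with b hb hbU
  exact (closure_iff ha haU).trans (closure_iff hb hbU).symm

theorem existsUnique_mem_connComps_subset_closure (hC : IsPreconnected C) (hCne : C.Nonempty)
    (hCY : C ⊆ closure Y) (hloc : ∀ x ∈ C, ∃ U, IsOpen U ∧ x ∈ U ∧ IsPreconnected (U ∩ Y)) :
    ∃! c, c ∈ connComps Y ∧ C ⊆ closure c := by
  obtain ⟨x, hx⟩ := hCne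
  obtain ⟨U, hU, hxU, hUY⟩ := hloc x hx
  obtain ⟨c, ⟨hc, hxc⟩, huniq⟩ := existsUnique_mem_connComps_mem_closure (hCY hx) hU hxU hUY
  exact ⟨c, ⟨hc, subset_closure_of_mem_connComps hC hCY hloc hc hx hxc⟩,
    fun c' hc' => huniq c' ⟨hc'.1, hc'.2 hx⟩⟩

end ConnComps

theorem interior_closure_inter_of_regular {α : Type*} [TopologicalSpace α] {s P : Set α}
    (hP : interior (closure P) = P) :
    interior (closure (s ∩ P)) = interior (closure s) ∩ P := by
  have hPo : IsOpen P := hP ▸ isOpen_interior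
  refine Subset.antisymm (subset_inter ?_ ?_) ?_
  · exact interior_mono (closure_mono inter_subset_left)
  · exact (interior_mono (closure_mono inter_subset_right)).trans hP.subset
  · refine interior_maximal ?_ (isOpen_interior.inter hPo)
    exact (inter_subset_inter_left P interior_subset).trans hPo.closure_inter

theorem exists_mem_lt_of_not_subset {E : Type*} [AddCommGroup E] [Module ℝ E]
    {Q : AffineSubspace ℝ E} {f : Module.Dual ℝ E} {r : ℝ} {p : E} (hp : p ∈ Q) (hfp : f p = r)
    (hQ : ¬(Q : Set E) ⊆ {x | f x = r}) : ∃ q ∈ Q, r < f q := by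
  obtain ⟨q, hqQ, hfq⟩ := not_subset.1 hQ
  rcases lt_or_gt_of_ne hfq with hlt | hgt
  · -- the reflection of `q` in `p` lies on the other side of the level set
    refine ⟨AffineMap.lineMap p q (-1 : ℝ), AffineMap.lineMap_mem _ hp hqQ, ?_⟩
    simp only [AffineMap.lineMap_apply_module', map_add, map_smul, map_sub, smul_eq_mul, hfp]
    linarith
  · exact ⟨q, hqQ, hgt⟩

section Convex

variable {E : Type*} [AddCommGroup E] [Module ℝ E] [TopologicalSpace E] [IsTopologicalAddGroup E]
  [ContinuousSMul ℝ E]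

theorem interior_closure_eq_of_isOpen_of_convex {P : Set E} (hPo : IsOpen P) (hPc : Convex ℝ P) :
    interior (closure P) = P := by
  rcases P.eq_empty_or_nonempty with rfl | hne
  · simp only [closure_empty, interior_empty]
  · have hint : (interior P).Nonempty := by rwa [hPo.interior_eq]
    rw [hPc.interior_closure_eq_interior_of_nonempty_interior hint, hPo.interior_eq]

theorem exists_isOpen_isPreconnected_inter_of_convex [LocallyConvexSpace ℝ E] {T K : Set E} {x : E}
    (hT : IsOpen T) (hK : Convex ℝ K) (hx : x ∈ T) :
    ∃ U, IsOpen U ∧ x ∈ U ∧ IsPreconnected (U ∩ (T ∩ K)) := by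
  obtain ⟨V, ⟨hVx, hVc⟩, hVT : V ⊆ T⟩ := (LocallyConvexSpace.convex_basis (𝕜 := ℝ) x).mem_iff.1
    (hT.mem_nhds hx)
  refine ⟨interior V, isOpen_interior, mem_interior_iff_mem_nhds.2 hVx, ?_⟩
  rw [← inter_assoc, inter_eq_left.2 (interior_subset.trans hVT)]
  exact (hVc.interior.inter hK).isPreconnected

theorem inter_level_subset_closure_inter_superlevel {Q : AffineSubspace ℝ E} {f : Module.Dual ℝ E}
    {r : ℝ} (hQ : ¬(Q : Set E) ⊆ {x | f x = r}) :
    (Q : Set E) ∩ {x | f x = r} ⊆ closure (Q ∩ {x | r < f x}) := by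
  rintro p ⟨hpQ, hfp⟩
  obtain ⟨q, hqQ, hfq⟩ := exists_mem_lt_of_not_subset hpQ hfp hQ
  have hseg : openSegment ℝ p q ⊆ Q ∩ {x | r < f x} := by
    refine subset_inter (Q.convex.openSegment_subset hpQ hqQ) ?_
    rintro - ⟨a, b, -, hb, hab, rfl⟩
    calc r = a * r + b * r := by rw [← add_mul, hab, one_mul]
      _ < a * r + b * f q := by gcongr
      _ = f (a • p + b • q) := by rw [map_add, map_smul, map_smul, hfp, smul_eq_mul, smul_eq_mul]
  exact closure_mono hseg (segment_subset_closure_openSegment (left_mem_segment ℝ p q))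

end Convex

theorem thickening_sep_subset {d : ℕ} {S : Set (Set (Fin d → ℝ))} {P : Set (Fin d → ℝ)}
    (hPo : IsOpen P) (hPc : Convex ℝ P) (hS : ∀ C ∈ S, C ⊆ P ∨ Disjoint C P) :
    thickening {C ∈ S | C ⊆ P} = thickening S ∩ P := by
  have hunion : ⋃ C ∈ {C ∈ S | C ⊆ P}, C = (⋃ C ∈ S, C) ∩ P := by
    refine Subset.antisymm (iUnion₂_subset fun C hC => ?_) ?_
    · exact subset_inter (subset_biUnion_of_mem (u := id) hC.1) hC.2
    · rintro x ⟨hx, hxP⟩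
      obtain ⟨C, hCS, hxC⟩ := mem_iUnion₂.1 hx
      have hCP : C ⊆ P := (hS C hCS).resolve_right fun hdisj => disjoint_left.1 hdisj hxC hxP
      exact mem_iUnion₂.2 ⟨C, ⟨hCS, hCP⟩, hxC⟩
  rw [thickening, hunion]
  exact interior_closure_inter_of_regular (interior_closure_eq_of_isOpen_of_convex hPo hPc)

namespace Arrangement

variable {d n : ℕ} {𝓗 : Arrangement d n} {S : Set (Set (Fin d → ℝ))} {C : Set (Fin d → ℝ)}
  {A : Finset (Fin n)} {e : Fin n}

variable (𝓗) in
/-- The linear functional `x ↦ ∑ j, normal i j * x j`, of which `H_i` is the level set at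
`offset i`. -/
def functional (i : Fin n) : Module.Dual ℝ (Fin d → ℝ) := dotProductEquiv ℝ (Fin d) (𝓗.normal i)

variable (𝓗) in
/-- The flat `L_A = ⋂ i ∈ A, H_i`, bundled as an affine subspace; it may be empty. -/
def flat (A : Finset (Fin n)) : AffineSubspace ℝ (Fin d → ℝ) where
  carrier := ⋂ i ∈ A, 𝓗.H i
  smul_vsub_vadd_mem' t x y z hx hy hz := by
    refine mem_iInter₂.2 fun i hi => ?_
    have hlevel : ∀ w ∈ ⋂ i ∈ A, 𝓗.H i, 𝓗.functional i w = 𝓗.offset i :=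
      fun w hw => mem_iInter₂.1 hw i hi
    change 𝓗.functional i (t • (x - y) + z) = 𝓗.offset i
    rw [map_add, map_smul, map_sub, hlevel x hx, hlevel y hy, hlevel z hz, sub_self, smul_zero,
      zero_add]

theorem mem_flat {x : Fin d → ℝ} :
    x ∈ 𝓗.flat A ↔ ∀ i ∈ A, 𝓗.functional i x = 𝓗.offset i :=
  mem_iInter₂

theorem coe_flat_insert :
    (𝓗.flat (insert e A) : Set (Fin d → ℝ)) = (𝓗.flat A : Set (Fin d → ℝ)) ∩ 𝓗.H e :=
  (Finset.set_biInter_insert e A 𝓗.H).trans (inter_comm _ _)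

theorem isOpen_pos : IsOpen (𝓗.pos e) :=
  isOpen_lt continuous_const (𝓗.functional e).continuous_of_finiteDimensional

theorem isOpen_neg : IsOpen (𝓗.neg e) :=
  isOpen_lt (𝓗.functional e).continuous_of_finiteDimensional continuous_const

theorem convex_pos : Convex ℝ (𝓗.pos e) :=
  convex_halfSpace_gt (𝓗.functional e).isLinear (𝓗.offset e)

theorem disjoint_pos_neg : Disjoint (𝓗.pos e) (𝓗.neg e) :=
  disjoint_left.2 fun _ => lt_asymm (α := ℝ)

theorem subset_pos_or_subset_neg (hC : C ∈ 𝓗.chambers) : C ⊆ 𝓗.pos e ∨ C ⊆ 𝓗.neg e := by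
  have hsides : C ⊆ 𝓗.pos e ∪ 𝓗.neg e :=
    fun x hx => (lt_or_gt_of_ne (subset_of_mem_connComps hC hx e)).symm
  exact (isPreconnected_of_mem_connComps hC).subset_or_subset isOpen_pos isOpen_neg
    disjoint_pos_neg hsides

theorem stratum_sep_subset_pos (hS : S ⊆ 𝓗.chambers) :
    𝓗.stratum {C ∈ S | C ⊆ 𝓗.pos e} A = thickening S ∩ (𝓗.flat A ∩ 𝓗.pos e) := by
  have hside : ∀ C ∈ S, C ⊆ 𝓗.pos e ∨ Disjoint C (𝓗.pos e) := fun C hC =>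
    (subset_pos_or_subset_neg (hS hC)).imp_right disjoint_pos_neg.symm.mono_left
  calc thickening {C ∈ S | C ⊆ 𝓗.pos e} ∩ 𝓗.flat A
      = thickening S ∩ 𝓗.pos e ∩ 𝓗.flat A := by
        rw [thickening_sep_subset isOpen_pos convex_pos hside]
    _ = thickening S ∩ (𝓗.flat A ∩ 𝓗.pos e) := by rw [inter_assoc, inter_comm (𝓗.pos e)]

theorem stratum_insert_subset_closure (hS : S ⊆ 𝓗.chambers)
    (hAe : ¬(𝓗.flat A : Set (Fin d → ℝ)) ⊆ 𝓗.H e) :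
    𝓗.stratum S (insert e A) ⊆ closure (𝓗.stratum {C ∈ S | C ⊆ 𝓗.pos e} A) := by
  calc 𝓗.stratum S (insert e A)
      = thickening S ∩ (𝓗.flat A ∩ 𝓗.H e) := congrArg (thickening S ∩ ·) coe_flat_insert
    _ ⊆ thickening S ∩ closure (𝓗.flat A ∩ 𝓗.pos e) :=
        inter_subset_inter_right _
          (inter_level_subset_closure_inter_superlevel (f := 𝓗.functional e) hAe)
    _ ⊆ closure (thickening S ∩ (𝓗.flat A ∩ 𝓗.pos e)) := isOpen_interior.inter_closure
    _ = closure (𝓗.stratum {C ∈ S | C ⊆ 𝓗.pos e} A) := by rw [stratum_sep_subset_pos hS]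

theorem GeneralPosition.linearIndepOn_normal (hgp : 𝓗.GeneralPosition)
    (hA : (𝓗.flat A : Set (Fin d → ℝ)).Nonempty) : LinearIndepOn ℝ 𝓗.normal (A : Set (Fin n)) := by
  refine hgp.1 A (not_lt.1 fun hcard => ?_)
  obtain ⟨B, hBA, hBcard⟩ := Finset.exists_subset_card_eq (Nat.succ_le_of_lt hcard)
  have hB : (⋂ i ∈ B, 𝓗.H i).Nonempty := hA.mono (biInter_subset_biInter_left hBA)
  exact hB.ne_empty (hgp.2 B hBcard)

theorem functional_mem_span_of_flat_subset (hA : (𝓗.flat A : Set (Fin d → ℝ)).Nonempty)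
    (hAe : (𝓗.flat A : Set (Fin d → ℝ)) ⊆ 𝓗.H e) :
    𝓗.functional e ∈ Submodule.span ℝ (𝓗.functional '' A) := by
  obtain ⟨p, hp⟩ := hA
  rw [image_eq_range]
  refine mem_span_of_iInf_ker_le_ker fun v hker => ?_
  have hv : ∀ i ∈ A, 𝓗.functional i v = 0 := fun i hi =>
    LinearMap.mem_ker.1 ((Submodule.mem_iInf _).1 hker ⟨i, hi⟩)
  have hpv : p + v ∈ 𝓗.flat A := mem_flat.2 fun i hi => by
    rw [map_add, hv i hi, add_zero, mem_flat.1 hp i hi]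
  have hep : 𝓗.functional e p = 𝓗.offset e := hAe hp
  have hepv : 𝓗.functional e (p + v) = 𝓗.offset e := hAe hpv
  rwa [map_add, hep, add_eq_left] at hepv

theorem GeneralPosition.not_flat_subset_H (hgp : 𝓗.GeneralPosition) (he : e ∉ A)
    (hne : (𝓗.flat (insert e A) : Set (Fin d → ℝ)).Nonempty) :
    ¬(𝓗.flat A : Set (Fin d → ℝ)) ⊆ 𝓗.H e := by
  intro hAe
  have hli : LinearIndepOn ℝ 𝓗.functional (insert e A : Set (Fin n)) := by
    rw [← Finset.coe_insert]
    exact (hgp.linearIndepOn_normal hne).map' _ (dotProductEquiv ℝ (Fin d)).ker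
  have hA : (𝓗.flat A : Set (Fin d → ℝ)).Nonempty := by
    rw [coe_flat_insert] at hne
    exact hne.left
  exact ((linearIndepOn_insert (mod_cast he)).1 hli).2 (functional_mem_span_of_flat_subset hA hAe)

end Arrangement

theorem stmt2_general {d n : ℕ} {𝓗 : Arrangement d n} {S : Set (Set (Fin d → ℝ))}
    (hS : S ⊆ 𝓗.chambers) {e : Fin n} {A : Finset (Fin n)}
    (hAe : ¬(𝓗.flat A : Set (Fin d → ℝ)) ⊆ 𝓗.H e) :
    ∀ c ∈ connComps (𝓗.stratum S (insert e A)),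
      ∃! c', c' ∈ connComps (𝓗.stratum {C ∈ S | C ⊆ 𝓗.pos e} A) ∧
        c ⊆ closure c' := by
  intro c hc
  have hcX : c ⊆ 𝓗.stratum S (insert e A) := subset_of_mem_connComps hc
  refine existsUnique_mem_connComps_subset_closure (isPreconnected_of_mem_connComps hc)
    (nonempty_of_mem_connComps hc)
    (hcX.trans (Arrangement.stratum_insert_subset_closure hS hAe)) fun x hx => ?_
  rw [Arrangement.stratum_sep_subset_pos hS]
  exact exists_isOpen_isPreconnected_inter_of_convex isOpen_interior
    ((𝓗.flat A).convex.inter Arrangement.convex_pos) (hcX hx).1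

/-- Let `S⁺ := {C ∈ S | C ⊂ H_e⁺}`, let `A ∈ supp S` with `e ∉ A`.
Then every connected component `c` of `T_S(A ∪ {e})` lies on the boundary of exactly
one connected component of `T_{S⁺}(A)`. -/
theorem stmt2 {d n : ℕ} (𝓗 : Arrangement d n) (hgp : 𝓗.GeneralPosition)
    (S : Set (Set (Fin d → ℝ))) (hS : S ⊆ 𝓗.chambers)
    (e : Fin n) (A : Finset (Fin n)) (hA : A ∈ 𝓗.supp S) (he : e ∉ A) :
    ∀ c ∈ connComps (𝓗.stratum S (insert e A)),
      ∃! c', c' ∈ connComps (𝓗.stratum {C ∈ S | C ⊆ 𝓗.pos e} A) ∧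
        c ⊆ closure c' := by
  rintro c ⟨p, hp, hc⟩
  exact stmt2_general hS (hgp.not_flat_subset_H he ⟨p, hp.2⟩) c ⟨p, hp, hc⟩
end
end

section
/- Let S be a strata-connected subset of the chambers of a hyperplane arrangement 𝓗 in general position in ℝ^d. Then |∂S| ≥ Σ_{A∈supp(S)} |b(A)|. -/
open Set Topology

noncomputable section

/-!
Encode a chamber by the set of hyperplanes with the chamber on their positive side, so that `S`
becomes a set family, i.e. a set of vertices of a hypercube. In general position, the connected
components of the stratum `T_S(A)` correspond to those of the `A`-cubes in this family, so
strata-connectedness says that the `A`-cubes are connected for every `A`.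

A set family contains `A`-cubes for at most as many `A` as it has members (Pajor's inequality for
the complement). If its cubes are connected, there is equality: by induction on `A`, it then
contains an `A`-cube for every `A` that it shatters, and Pajor's inequality applies to the family
itself.

Fix a hyperplane `H_f`, let `ℬ` be the family of the chambers in `S` with a facet in `H_f`, and let
`𝒜 ⊆ ℬ` be the family of those whose neighbour across `H_f` is again in `S`; the cubes of `𝒜` are
connected. If `H_f` bounds `T_S(A)`, then `ℬ` contains an `A`-cube and `𝒜` does not. Hence `H_f`
bounds at most `#ℬ - #𝒜` strata, and this is the number of boundary edges across `H_f`.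
-/

section Hypercube

open scoped symmDiff

variable {α : Type*} [DecidableEq α] {𝒜 ℬ : Finset (Finset α)} {A B s t u v : Finset α} {e : α}

lemma mem_symmDiff_singleton {x : α} : x ∈ u ∆ {e} ↔ (x ∈ u ↔ x ≠ e) := by
  grind [Finset.mem_symmDiff]

lemma symmDiff_empty : u ∆ ∅ = u := symmDiff_bot u

lemma symmDiff_inter_eq_sdiff : u ∆ (u ∩ A) = u \ A := by
  grind [Finset.mem_symmDiff]

/-- The subgraph of the hypercube graph on `Finset α` spanned by `𝒜`: its edges join the members of
`𝒜` that differ in exactly one element. Sets outside `𝒜` are isolated vertices. -/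
def cubeGraph (𝒜 : Finset (Finset α)) : SimpleGraph (Finset α) where
  Adj u v := u ∈ 𝒜 ∧ v ∈ 𝒜 ∧ ∃ e, u ∆ {e} = v
  symm := ⟨by
    rintro u v ⟨hu, hv, e, rfl⟩
    exact ⟨hv, hu, e, symmDiff_symmDiff_cancel_right _ _⟩⟩
  loopless := ⟨by
    rintro u ⟨-, -, e, he⟩
    exact Finset.singleton_ne_empty e (symmDiff_eq_left.1 he)⟩

lemma cubeGraph_adj_symmDiff_singleton (hu : u ∈ 𝒜) (hue : u ∆ {e} ∈ 𝒜) :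
    (cubeGraph 𝒜).Adj u (u ∆ {e}) :=
  ⟨hu, hue, e, rfl⟩

lemma cubeGraph_mono (h : 𝒜 ⊆ ℬ) : cubeGraph 𝒜 ≤ cubeGraph ℬ :=
  fun _ _ ⟨hu, hv, he⟩ ↦ ⟨h hu, h hv, he⟩

/-- A set family is cube-connected if it induces a connected (possibly empty) subgraph of the
hypercube graph. -/
def IsCubeConnected (𝒜 : Finset (Finset α)) : Prop :=
  ∀ u ∈ 𝒜, ∀ v ∈ 𝒜, (cubeGraph 𝒜).Reachable u v

/-- The members of `𝒜` that are a vertex of a cube `{u ∆ t | t ⊆ A}` contained in `𝒜`. The usual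
`𝒜^A` keeps one vertex of each such cube; keeping all of them makes the definition symmetric in the
directions, and does not affect connectedness. -/
def cubes (𝒜 : Finset (Finset α)) (A : Finset α) : Finset (Finset α) :=
  {u ∈ 𝒜 | ∀ t ∈ A.powerset, u ∆ t ∈ 𝒜}

lemma mem_cubes : u ∈ cubes 𝒜 A ↔ ∀ t ⊆ A, u ∆ t ∈ 𝒜 := by
  simp only [cubes, Finset.mem_filter, Finset.mem_powerset, and_iff_right_iff_imp]
  exact fun h ↦ by simpa only [symmDiff_empty] using h ∅ (Finset.empty_subset A)

lemma cubes_empty : cubes 𝒜 ∅ = 𝒜 := by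
  ext u
  simp [mem_cubes, Finset.subset_empty, symmDiff_empty]

lemma mem_cubes_singleton : u ∈ cubes 𝒜 {e} ↔ u ∈ 𝒜 ∧ u ∆ {e} ∈ 𝒜 := by
  simp [mem_cubes, Finset.subset_singleton_iff, symmDiff_empty]

lemma cubes_mono (h : 𝒜 ⊆ ℬ) : cubes 𝒜 A ⊆ cubes ℬ A :=
  fun _ hu ↦ mem_cubes.2 fun t ht ↦ h (mem_cubes.1 hu t ht)

lemma cubes_anti (h : A ⊆ B) : cubes 𝒜 B ⊆ cubes 𝒜 A :=
  fun _ hu ↦ mem_cubes.2 fun t ht ↦ mem_cubes.1 hu t (ht.trans h)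

lemma symmDiff_mem_cubes (hu : u ∈ cubes 𝒜 A) (ht : t ⊆ A) : u ∆ t ∈ cubes 𝒜 A :=
  mem_cubes.2 fun s hs ↦ by
    rw [symmDiff_assoc]
    exact mem_cubes.1 hu _ (symmDiff_le_sup.trans (Finset.union_subset ht hs))

lemma cubes_cubes : cubes (cubes 𝒜 A) B = cubes 𝒜 (A ∪ B) := by
  ext u
  simp only [mem_cubes, symmDiff_assoc]
  refine ⟨fun h t ht ↦ ?_, fun h s hs t ht ↦
    h _ (symmDiff_le_sup.trans (Finset.union_subset (hs.trans Finset.subset_union_right)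
      (ht.trans Finset.subset_union_left)))⟩
  have hsplit : (t \ A) ∆ (t ∩ A) = t := by grind [Finset.mem_symmDiff]
  rw [← hsplit]
  exact h _ (sdiff_le_iff.2 ht) _ Finset.inter_subset_right

lemma cubes_insert : cubes 𝒜 (insert e A) = cubes (cubes 𝒜 A) {e} := by
  rw [cubes_cubes, Finset.union_comm, Finset.singleton_union]

lemma reachable_symmDiff_of_mem_cubes (hu : u ∈ cubes 𝒜 A) (ht : t ⊆ A) :
    (cubeGraph (cubes 𝒜 A)).Reachable u (u ∆ t) := by
  induction t using Finset.induction_on with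
  | empty => simp [symmDiff_empty]
  | insert e t het ih =>
    have hinsert : u ∆ insert e t = u ∆ t ∆ {e} := by grind [Finset.mem_symmDiff]
    have ht' := (Finset.subset_insert e t).trans ht
    refine (ih ht').trans (hinsert ▸ SimpleGraph.Adj.reachable ?_)
    exact cubeGraph_adj_symmDiff_singleton (symmDiff_mem_cubes hu ht')
      (hinsert ▸ symmDiff_mem_cubes hu ht)

/-- The family analogue of strata-connectedness: for every set `A` of directions, the `A`-cubes in
`𝒜` form a connected family. These are the ample (or lopsided) families. -/
def HasConnectedCubes (𝒜 : Finset (Finset α)) : Prop :=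
  ∀ A, IsCubeConnected (cubes 𝒜 A)

protected lemma HasConnectedCubes.cubes (h : HasConnectedCubes 𝒜) (A : Finset α) :
    HasConnectedCubes (cubes 𝒜 A) :=
  fun _ ↦ cubes_cubes (𝒜 := 𝒜) ▸ h _

section Facet

variable {b : Bool}

/-- The part of `𝒜` in one of the two facets of the hypercube that are orthogonal to the
direction `e`; the truth value `b` selects the facet. -/
def facet (𝒜 : Finset (Finset α)) (e : α) (b : Bool) : Finset (Finset α) :=
  {u ∈ 𝒜 | e ∈ u ↔ b}

/-- The projection of the hypercube along the direction `e` onto a facet. -/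
def facetProj (e : α) (b : Bool) (u : Finset α) : Finset α :=
  if e ∈ u ↔ b then u else u ∆ {e}

lemma mem_facet : u ∈ facet 𝒜 e b ↔ u ∈ 𝒜 ∧ (e ∈ u ↔ b) := Finset.mem_filter

lemma facet_subset : facet 𝒜 e b ⊆ 𝒜 := Finset.filter_subset _ _

lemma facetProj_of_mem_facet (hu : u ∈ facet 𝒜 e b) : facetProj e b u = u :=
  if_pos (mem_facet.1 hu).2

lemma facetProj_mem_facet (hu : u ∈ cubes 𝒜 {e}) : facetProj e b u ∈ facet 𝒜 e b := by
  have := mem_cubes_singleton.1 hu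
  grind [facetProj, mem_facet, mem_symmDiff_singleton]

lemma facetProj_symmDiff_self : facetProj e b (u ∆ {e}) = facetProj e b u := by
  grind [facetProj, mem_symmDiff_singleton, symmDiff_symmDiff_cancel_right]

lemma facetProj_symmDiff_of_ne {i : α} (hi : i ≠ e) :
    facetProj e b (u ∆ {i}) = facetProj e b u ∆ {i} := by
  grind [facetProj, mem_symmDiff_singleton, symmDiff_right_comm]

lemma reachable_facetProj (h : (cubeGraph (cubes 𝒜 {e})).Reachable u v) :
    (cubeGraph (facet 𝒜 e b)).Reachable (facetProj e b u) (facetProj e b v) := by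
  rw [SimpleGraph.reachable_iff_reflTransGen] at h ⊢
  refine h.lift' _ ?_
  rintro w _ ⟨hw, hwi, i, rfl⟩
  obtain rfl | hi := eq_or_ne i e
  · rw [Function.onFun, facetProj_symmDiff_self]
  · refine .single ⟨facetProj_mem_facet hw, facetProj_mem_facet hwi, i, ?_⟩
    rw [facetProj_symmDiff_of_ne hi]

-- A path that leaves the facet does so along an `e`-edge and returns along another one; the
-- detour is replaced by the projection of a path in the family of `e`-edges.
protected lemma IsCubeConnected.facet (h : IsCubeConnected 𝒜) (he : IsCubeConnected (cubes 𝒜 {e})) :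
    IsCubeConnected (facet 𝒜 e b) := by
  intro u hu v hv
  suffices hpath : ∀ w, Relation.ReflTransGen (cubeGraph 𝒜).Adj u w →
      (w ∈ facet 𝒜 e b → (cubeGraph (facet 𝒜 e b)).Reachable u w) ∧
      (w ∉ facet 𝒜 e b → ∀ z ∈ cubes 𝒜 {e},
        (cubeGraph (facet 𝒜 e b)).Reachable u (facetProj e b z)) from
    (hpath v ((SimpleGraph.reachable_iff_reflTransGen u v).1
      (h u (facet_subset hu) v (facet_subset hv)))).1 hv
  intro w huw
  induction huw with
  | refl => exact ⟨fun _ ↦ .refl u, fun hu' ↦ absurd hu hu'⟩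
  | @tail w _ _ hww' ih =>
    obtain ⟨hw, hw', i, rfl⟩ := hww'
    obtain rfl | hi := eq_or_ne i e
    · have hwZ : w ∈ cubes 𝒜 {i} := mem_cubes_singleton.2 ⟨hw, hw'⟩
      have hproj : ∀ z ∈ cubes 𝒜 {i},
          (cubeGraph (facet 𝒜 i b)).Reachable u (facetProj i b z) := by
        by_cases hwf : w ∈ facet 𝒜 i b
        · intro z hz
          refine (ih.1 hwf).trans ?_
          simpa only [facetProj_of_mem_facet hwf] using
            reachable_facetProj (b := b) (he w hwZ z hz)
        · exact ih.2 hwf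
      refine ⟨fun hw'f ↦ ?_, fun _ ↦ hproj⟩
      simpa only [facetProj_of_mem_facet hw'f] using
        hproj _ (symmDiff_mem_cubes hwZ subset_rfl)
    · have hfacet : w ∆ {i} ∈ facet 𝒜 e b ↔ w ∈ facet 𝒜 e b := by
        grind [mem_facet, mem_symmDiff_singleton]
      refine ⟨fun hw'f ↦ ?_, fun hw'f ↦ ih.2 (hfacet.not.1 hw'f)⟩
      have hwf := hfacet.1 hw'f
      exact (ih.1 hwf).trans (cubeGraph_adj_symmDiff_singleton hwf hw'f).reachable

lemma cubes_facet_of_mem (he : e ∈ A) : cubes (facet 𝒜 e b) A = ∅ := by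
  refine Finset.eq_empty_of_forall_notMem fun u hu ↦ ?_
  have hue := mem_cubes_singleton.1 (cubes_anti (Finset.singleton_subset_iff.2 he) hu)
  grind [mem_facet, mem_symmDiff_singleton]

lemma cubes_facet_of_notMem (he : e ∉ A) :
    cubes (facet 𝒜 e b) A = facet (cubes 𝒜 A) e b := by
  ext u
  have hmem : ∀ t ⊆ A, (e ∈ u ∆ t ↔ e ∈ u) := by grind [Finset.mem_symmDiff]
  simp only [mem_cubes, mem_facet]
  refine ⟨fun h ↦ ⟨fun t ht ↦ (h t ht).1, ?_⟩, fun h t ht ↦ ⟨h.1 t ht, (hmem t ht).trans h.2⟩⟩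
  exact (hmem ∅ (Finset.empty_subset A)).symm.trans (h ∅ (Finset.empty_subset A)).2

protected lemma HasConnectedCubes.facet (h : HasConnectedCubes 𝒜) :
    HasConnectedCubes (facet 𝒜 e b) := by
  intro A
  by_cases he : e ∈ A
  · rw [cubes_facet_of_mem he]
    exact fun u hu ↦ absurd hu (Finset.notMem_empty u)
  · rw [cubes_facet_of_notMem he]
    exact (h A).facet (cubes_insert (𝒜 := 𝒜) ▸ h (insert e A))

lemma shatters_facet (he : e ∉ A) (h : 𝒜.Shatters (insert e A)) :
    (facet 𝒜 e b).Shatters A := by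
  intro t ht
  obtain ⟨u, hu, hut⟩ := h (t := if b then insert e t else t) (by grind)
  have hmem : ∀ x, (x = e ∨ x ∈ A) ∧ x ∈ u ↔ x ∈ if b then insert e t else t := by
    simp [← hut]
  have het : e ∉ t := fun h ↦ he (ht h)
  refine ⟨u, mem_facet.2 ⟨hu, ?_⟩, ?_⟩
  · have := hmem e
    grind
  · ext x
    have := hmem x
    grind

end Facet

lemma IsCubeConnected.cubes_singleton_nonempty (h : IsCubeConnected 𝒜) (hu : u ∈ 𝒜) (hv : v ∈ 𝒜)
    (heu : e ∈ u) (hev : e ∉ v) : (cubes 𝒜 {e}).Nonempty := by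
  by_contra hempty
  have hstay : ∀ w, Relation.ReflTransGen (cubeGraph 𝒜).Adj u w → e ∈ w := by
    intro w huw
    induction huw with
    | refl => exact heu
    | @tail w _ _ hww' hew =>
      obtain ⟨hw, hw', i, rfl⟩ := hww'
      refine mem_symmDiff_singleton.2 ⟨fun _ ↦ ?_, fun _ ↦ hew⟩
      rintro rfl
      exact hempty ⟨w, mem_cubes_singleton.2 ⟨hw, hw'⟩⟩
  exact hev (hstay v ((SimpleGraph.reachable_iff_reflTransGen u v).1 (h u hu v hv)))

lemma HasConnectedCubes.cubes_nonempty_of_shatters (h : HasConnectedCubes 𝒜)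
    (hA : 𝒜.Shatters A) : (cubes 𝒜 A).Nonempty := by
  induction A using Finset.induction_on generalizing 𝒜 with
  | empty => rwa [cubes_empty, ← Finset.shatters_empty]
  | insert e A he ih =>
    obtain ⟨u, hu⟩ := ih h.facet (shatters_facet (b := true) he hA)
    obtain ⟨v, hv⟩ := ih h.facet (shatters_facet (b := false) he hA)
    rw [cubes_facet_of_notMem he, mem_facet] at hu hv
    rw [cubes_insert]
    exact (h A).cubes_singleton_nonempty hu.1 hv.1 (by simpa using hu.2) (by simpa using hv.2)

section StrongShatterer

variable [Fintype α]

/-- The sets strongly shattered by `𝒜`: those `A` for which `𝒜` contains an `A`-cube. Compare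
`Finset.shatterer`. -/
def strongShatterer (𝒜 : Finset (Finset α)) : Finset (Finset α) :=
  {A | (cubes 𝒜 A).Nonempty}

lemma mem_strongShatterer : A ∈ strongShatterer 𝒜 ↔ (cubes 𝒜 A).Nonempty := by
  simp [strongShatterer]

lemma strongShatterer_mono (h : 𝒜 ⊆ ℬ) : strongShatterer 𝒜 ⊆ strongShatterer ℬ :=
  fun _ hA ↦ mem_strongShatterer.2 ((mem_strongShatterer.1 hA).mono (cubes_mono h))

lemma compl_notMem_shatterer_compl (hA : A ∈ strongShatterer 𝒜) : Aᶜ ∉ 𝒜ᶜ.shatterer := by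
  intro hshatter
  obtain ⟨u, hu⟩ := mem_strongShatterer.1 hA
  obtain ⟨w, hw, hwu⟩ := Finset.mem_shatterer.1 hshatter (t := Aᶜ ∩ u) Finset.inter_subset_left
  have hdiff : u ∆ w ⊆ A := by
    intro x hx
    have hx' := congrArg (x ∈ ·) hwu
    grind [Finset.mem_symmDiff, Finset.mem_compl]
  refine Finset.mem_compl.1 hw ?_
  simpa only [symmDiff_symmDiff_cancel_left] using mem_cubes.1 hu _ hdiff

-- Pajor's inequality `#ℬ ≤ #ℬ.shatterer` for the complementary family `ℬ = 𝒜ᶜ`.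
lemma card_strongShatterer_le (𝒜 : Finset (Finset α)) : (strongShatterer 𝒜).card ≤ 𝒜.card := by
  have hsub : (strongShatterer 𝒜).image compl ⊆ 𝒜ᶜ.shattererᶜ :=
    Finset.image_subset_iff.2 fun A hA ↦ Finset.mem_compl.2 (compl_notMem_shatterer_compl hA)
  have hcard := Finset.card_le_card hsub
  rw [Finset.card_image_of_injective _ compl_injective, Finset.card_compl] at hcard
  have hpajor := Finset.card_le_card_shatterer 𝒜ᶜ
  rw [Finset.card_compl] at hpajor
  have := Finset.card_le_univ 𝒜
  omega

lemma HasConnectedCubes.card_le_card_strongShatterer (h : HasConnectedCubes 𝒜) :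
    𝒜.card ≤ (strongShatterer 𝒜).card :=
  𝒜.card_le_card_shatterer.trans <| Finset.card_le_card fun _ hA ↦
    mem_strongShatterer.2 (h.cubes_nonempty_of_shatters (Finset.mem_shatterer.1 hA))

theorem HasConnectedCubes.card_strongShatterer_sdiff_le (h : HasConnectedCubes 𝒜) (hsub : 𝒜 ⊆ ℬ) :
    (strongShatterer ℬ \ strongShatterer 𝒜).card ≤ (ℬ \ 𝒜).card := by
  rw [Finset.card_sdiff_of_subset hsub, Finset.card_sdiff_of_subset (strongShatterer_mono hsub)]
  exact tsub_le_tsub (card_strongShatterer_le ℬ) h.card_le_card_strongShatterer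

end StrongShatterer

end Hypercube

lemma exists_dotProduct_eq_of_linearIndependent {ι m K : Type*} [Finite ι] [Fintype m] [Field K]
    {v : ι → m → K} (hv : LinearIndependent K v) (c : ι → K) :
    ∃ w : m → K, ∀ i, ∑ j, v i j * w j = c i := by
  cases nonempty_fintype ι
  have hrange : (Matrix.of v).mulVecLin.range = ⊤ := by
    refine Submodule.eq_top_of_finrank_eq ?_
    rw [Module.finrank_fintype_fun_eq_card]
    exact LinearIndependent.rank_matrix (M := Matrix.of v) hv
  obtain ⟨w, hw⟩ := LinearMap.range_eq_top.1 hrange c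
  exact ⟨w, congrFun hw⟩

namespace Arrangement

open scoped symmDiff

variable {d n : ℕ} {𝓗 : Arrangement d n} {S : Set (Set (Fin d → ℝ))} {C : Set (Fin d → ℝ)}
  {x y z : Fin d → ℝ} {i f : Fin n} {A t u v : Finset (Fin n)}

/-- The affine form whose zero set is the `i`-th hyperplane. -/
def form (𝓗 : Arrangement d n) (i : Fin n) : (Fin d → ℝ) →ᵃ[ℝ] ℝ :=
  (∑ j, 𝓗.normal i j • LinearMap.proj j : (Fin d → ℝ) →ₗ[ℝ] ℝ).toAffineMap -
    AffineMap.const ℝ _ (𝓗.offset i)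

lemma form_apply : 𝓗.form i x = ∑ j, 𝓗.normal i j * x j - 𝓗.offset i := by
  simp [form]

lemma mem_H_iff : x ∈ 𝓗.H i ↔ 𝓗.form i x = 0 := by
  rw [form_apply, sub_eq_zero]
  rfl

lemma mem_pos_iff : x ∈ 𝓗.pos i ↔ 0 < 𝓗.form i x := by
  rw [form_apply, sub_pos]
  rfl

lemma mem_neg_iff : x ∈ 𝓗.neg i ↔ 𝓗.form i x < 0 := by
  rw [form_apply, sub_neg]
  rfl

lemma form_add_smul (w : Fin d → ℝ) (ε : ℝ) :
    𝓗.form i (x + ε • w) = 𝓗.form i x + ε * ∑ j, 𝓗.normal i j * w j := by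
  simp only [form_apply, Pi.add_apply, Pi.smul_apply, smul_eq_mul, mul_add, Finset.sum_add_distrib,
    Finset.mul_sum, mul_left_comm]
  ring

lemma continuous_form : Continuous (𝓗.form i) := AffineMap.continuous_of_finiteDimensional _

section SignVector

/-- The hyperplanes containing `x`. -/
def zeroSet (𝓗 : Arrangement d n) (x : Fin d → ℝ) : Finset (Fin n) := {i | 𝓗.form i x = 0}

/-- The hyperplanes with `x` on their positive side. Together with `zeroSet`, it encodes the sign
vector of `x`. -/
def posSet (𝓗 : Arrangement d n) (x : Fin d → ℝ) : Finset (Fin n) := {i | 0 < 𝓗.form i x}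

/-- The points off the hyperplanes whose positive side is given by `u`; nonempty cells are exactly
the chambers. -/
def cell (𝓗 : Arrangement d n) (u : Finset (Fin n)) : Set (Fin d → ℝ) :=
  ⋂ i, 𝓗.form i ⁻¹' if i ∈ u then Ioi 0 else Iio 0

lemma mem_zeroSet : i ∈ 𝓗.zeroSet x ↔ 𝓗.form i x = 0 := by simp [zeroSet]

lemma mem_posSet : i ∈ 𝓗.posSet x ↔ 0 < 𝓗.form i x := by simp [posSet]

lemma mem_cell : x ∈ 𝓗.cell u ↔ 𝓗.zeroSet x = ∅ ∧ 𝓗.posSet x = u := by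
  simp only [cell, mem_iInter, Finset.ext_iff, mem_zeroSet, mem_posSet, ← forall_and]
  refine forall_congr' fun i ↦ ?_
  split_ifs with hi <;> grind

lemma mem_cell_posSet (hx : 𝓗.zeroSet x = ∅) : x ∈ 𝓗.cell (𝓗.posSet x) := mem_cell.2 ⟨hx, rfl⟩

lemma zeroSet_eq_empty : 𝓗.zeroSet x = ∅ ↔ x ∈ 𝓗.free := by
  simp [Finset.ext_iff, mem_zeroSet, free, mem_H_iff]

lemma eq_of_cell_eq (hu : (𝓗.cell u).Nonempty) (huv : 𝓗.cell u = 𝓗.cell v) : u = v := by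
  obtain ⟨x, hx⟩ := hu
  exact (mem_cell.1 hx).2.symm.trans (mem_cell.1 (huv ▸ hx)).2

lemma isOpen_cell : IsOpen (𝓗.cell u) :=
  isOpen_iInter_of_finite fun i ↦ IsOpen.preimage continuous_form <| by
    split_ifs
    exacts [isOpen_Ioi, isOpen_Iio]

lemma convex_cell : Convex ℝ (𝓗.cell u) :=
  convex_iInter fun i ↦ Convex.affine_preimage (𝓗.form i) <| by
    split_ifs
    exacts [convex_Ioi 0, convex_Iio 0]

lemma eventually_zeroSet_posSet (x : Fin d → ℝ) :
    ∀ᶠ y in 𝓝 x, 𝓗.zeroSet y ⊆ 𝓗.zeroSet x ∧ 𝓗.posSet x ∆ 𝓗.posSet y ⊆ 𝓗.zeroSet x := by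
  have hsign : ∀ᶠ y in 𝓝 x, ∀ i, 𝓗.form i x ≠ 0 →
      𝓗.form i y ≠ 0 ∧ (0 < 𝓗.form i y ↔ 0 < 𝓗.form i x) := by
    refine Filter.eventually_all.2 fun i ↦ Filter.eventually_imp_distrib_left.2 fun hi ↦ ?_
    have hcont := (𝓗.continuous_form (i := i)).continuousAt (x := x)
    obtain hneg | hpos := lt_or_gt_of_ne hi
    · filter_upwards [hcont.eventually_lt_const hneg] with y hy
      exact ⟨hy.ne, iff_of_false hy.not_gt hneg.not_gt⟩
    · filter_upwards [hcont.eventually_const_lt hpos] with y hy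
      exact ⟨hy.ne', iff_of_true hy hpos⟩
  filter_upwards [hsign] with y hy
  constructor
  · intro i hi
    by_contra hix
    exact (hy i (mt mem_zeroSet.2 hix)).1 (mem_zeroSet.1 hi)
  · intro i hi
    by_contra hix
    have hiff := (hy i (mt mem_zeroSet.2 hix)).2
    rw [Finset.mem_symmDiff, mem_posSet, mem_posSet, hiff] at hi
    tauto

lemma connectedComponentIn_free (hx : x ∈ 𝓗.free) :
    connectedComponentIn 𝓗.free x = 𝓗.cell (𝓗.posSet x) := by
  have hcell : 𝓗.cell (𝓗.posSet x) ⊆ 𝓗.free := fun y hy ↦ zeroSet_eq_empty.1 (mem_cell.1 hy).1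
  refine subset_antisymm (fun y hy ↦ ?_) (convex_cell.isPreconnected.subset_connectedComponentIn
    (mem_cell_posSet (zeroSet_eq_empty.2 hx)) hcell)
  have hfree := connectedComponentIn_subset 𝓗.free x
  refine mem_cell.2 ⟨zeroSet_eq_empty.2 (hfree hy), ?_⟩
  refine isPreconnected_connectedComponentIn.induction₂ (fun a b ↦ 𝓗.posSet b = 𝓗.posSet a)
    (fun a ha ↦ ?_) (fun _ _ _ _ _ _ hab hbc ↦ hbc.trans hab) (fun _ _ _ _ h ↦ h.symm)
    (mem_connectedComponentIn hx) hy
  filter_upwards [mem_nhdsWithin_of_mem_nhds (𝓗.eventually_zeroSet_posSet a)] with b hb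
  rw [zeroSet_eq_empty.2 (hfree ha)] at hb
  exact (symmDiff_eq_bot.1 (Finset.subset_empty.1 hb.2)).symm

lemma mem_chambers_iff : C ∈ 𝓗.chambers ↔ ∃ u, (𝓗.cell u).Nonempty ∧ C = 𝓗.cell u := by
  constructor
  · rintro ⟨x, hx, rfl⟩
    rw [connectedComponentIn_free hx]
    exact ⟨_, ⟨x, mem_cell_posSet (zeroSet_eq_empty.2 hx)⟩, rfl⟩
  · rintro ⟨_, ⟨x, hx⟩, rfl⟩
    obtain ⟨hx0, rfl⟩ := mem_cell.1 hx
    exact ⟨x, zeroSet_eq_empty.1 hx0, (connectedComponentIn_free (zeroSet_eq_empty.1 hx0)).symm⟩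

lemma GeneralPosition.linearIndependent_zeroSet (hgp : 𝓗.GeneralPosition) (x : Fin d → ℝ) :
    LinearIndependent ℝ fun i : 𝓗.zeroSet x ↦ 𝓗.normal i := by
  refine hgp.1 _ (not_lt.1 fun hcard ↦ ?_)
  obtain ⟨A, hA, hAcard⟩ := Finset.exists_subset_card_eq (Nat.succ_le_of_lt hcard)
  refine (hgp.2 A hAcard ▸ notMem_empty x) (mem_iInter₂.2 fun i hi ↦ ?_)
  exact mem_H_iff.2 (mem_zeroSet.1 (hA hi))

-- General position allows the signs of the forms vanishing at `x` to be prescribed near `x`.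
lemma GeneralPosition.mem_closure_cell (hgp : 𝓗.GeneralPosition) (ht : t ⊆ 𝓗.zeroSet x) :
    x ∈ closure (𝓗.cell (𝓗.posSet x ∆ t)) := by
  obtain ⟨w, hw⟩ := exists_dotProduct_eq_of_linearIndependent (hgp.linearIndependent_zeroSet x)
    fun i ↦ if i.1 ∈ t then 1 else -1
  have htendsto : Filter.Tendsto (fun ε : ℝ ↦ x + ε • w) (𝓝[>] 0) (𝓝 x) := by
    refine Filter.Tendsto.mono_left (Continuous.tendsto' (by fun_prop) _ _ (by simp))
      nhdsWithin_le_nhds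
  refine mem_closure_of_tendsto htendsto ?_
  filter_upwards [htendsto.eventually (𝓗.eventually_zeroSet_posSet x), self_mem_nhdsWithin]
    with ε ⟨hzero, hpos⟩ hε
  have hform : ∀ i ∈ 𝓗.zeroSet x, 𝓗.form i (x + ε • w) = if i ∈ t then ε else -ε := by
    intro i hi
    rw [form_add_smul, mem_zeroSet.1 hi, hw ⟨i, hi⟩]
    simp
  have hε : 0 < ε := hε
  refine mem_cell.2 ⟨Finset.eq_empty_of_forall_notMem fun i hi ↦ ?_, Finset.ext fun i ↦ ?_⟩
  · have := hform i (hzero hi)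
    rw [mem_zeroSet.1 hi] at this
    grind
  · by_cases hi : i ∈ 𝓗.zeroSet x
    · have := hform i hi
      grind [Finset.mem_symmDiff, mem_posSet, mem_zeroSet]
    · have := mt (@hpos i) hi
      grind [Finset.mem_symmDiff]

end SignVector

section SignFamily

open Classical in
/-- The set `S` of chambers as a set of vertices of the hypercube: each chamber in `S` is encoded by
the common value of `posSet` at its points. -/
def signFamily (𝓗 : Arrangement d n) (S : Set (Set (Fin d → ℝ))) : Finset (Finset (Fin n)) :=
  {u | 𝓗.cell u ∈ S}

lemma mem_signFamily : u ∈ 𝓗.signFamily S ↔ 𝓗.cell u ∈ S := by simp [signFamily]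

lemma mem_signFamily_chambers : u ∈ 𝓗.signFamily 𝓗.chambers ↔ (𝓗.cell u).Nonempty := by
  rw [mem_signFamily, mem_chambers_iff]
  refine ⟨?_, fun hu ↦ ⟨u, hu, rfl⟩⟩
  rintro ⟨v, hv, huv⟩
  rwa [huv]

lemma signFamily_mono {S' : Set (Set (Fin d → ℝ))} (h : S ⊆ S') :
    𝓗.signFamily S ⊆ 𝓗.signFamily S' :=
  fun _ hu ↦ mem_signFamily.2 (h (mem_signFamily.1 hu))

lemma GeneralPosition.mem_thickening_iff (hgp : 𝓗.GeneralPosition) (hS : S ⊆ 𝓗.chambers) :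
    x ∈ thickening S ↔ 𝓗.posSet x ∈ cubes (𝓗.signFamily S) (𝓗.zeroSet x) := by
  rw [mem_cubes, thickening]
  constructor
  · intro hx t ht
    obtain ⟨y, hyS, hyt⟩ :=
      mem_closure_iff.1 (hgp.mem_closure_cell ht) _ isOpen_interior hx
    obtain ⟨z, hzt, hzS⟩ := mem_closure_iff.1 (interior_subset hyS) _ isOpen_cell hyt
    obtain ⟨C, hC, hzC⟩ := mem_iUnion₂.1 hzS
    obtain ⟨v, -, rfl⟩ := mem_chambers_iff.1 (hS hC)
    rwa [← (mem_cell.1 hzt).2, (mem_cell.1 hzC).2, mem_signFamily]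
  · intro hx
    refine mem_interior_iff_mem_nhds.2 ?_
    filter_upwards [𝓗.eventually_zeroSet_posSet x] with y ⟨_, hpos⟩
    have hyS := mem_signFamily.1 (hx _ hpos)
    rw [symmDiff_symmDiff_cancel_left] at hyS
    refine closure_mono (subset_biUnion_of_mem hyS) ?_
    simpa only [symmDiff_empty] using hgp.mem_closure_cell (Finset.empty_subset (𝓗.zeroSet y))

lemma GeneralPosition.mem_stratum_iff (hgp : 𝓗.GeneralPosition) (hS : S ⊆ 𝓗.chambers) :
    x ∈ 𝓗.stratum S A ↔
      𝓗.posSet x ∈ cubes (𝓗.signFamily S) (𝓗.zeroSet x) ∧ A ⊆ 𝓗.zeroSet x := by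
  rw [stratum, mem_inter_iff, hgp.mem_thickening_iff hS]
  simp [mem_H_iff, Finset.subset_iff, mem_zeroSet]

-- The witness is the point where the segment from `y` to `z` meets the `b`-th hyperplane.
lemma exists_zeroSet_posSet_eq_insert {b : Fin n} (hb : b ∉ A) (hy : 𝓗.zeroSet y = A)
    (hyu : 𝓗.posSet y = u \ A) (hz : 𝓗.zeroSet z = A) (hzu : 𝓗.posSet z = u ∆ {b} \ A) :
    ∃ x, 𝓗.zeroSet x = insert b A ∧ 𝓗.posSet x = u \ insert b A := by
  have hmem : ∀ i, (𝓗.form i y = 0 ↔ i ∈ A) ∧ (0 < 𝓗.form i y ↔ i ∈ u \ A) ∧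
      (𝓗.form i z = 0 ↔ i ∈ A) ∧ (0 < 𝓗.form i z ↔ i ∈ u ∆ {b} \ A) := fun i ↦
    ⟨hy ▸ mem_zeroSet.symm, hyu ▸ mem_posSet.symm, hz ▸ mem_zeroSet.symm, hzu ▸ mem_posSet.symm⟩
  simp only [Finset.mem_sdiff, mem_symmDiff_singleton] at hmem
  have hsign : (0 : ℝ) ∈ openSegment ℝ (𝓗.form b y) (𝓗.form b z) := by
    have := hmem b
    rw [openSegment_eq_Ioo' (by grind)]
    grind
  rw [← image_openSegment] at hsign
  obtain ⟨x, ⟨r, s, hr, hs, hrs, rfl⟩, hxb⟩ := hsign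
  have hform : ∀ i, 𝓗.form i (r • y + s • z) = r * 𝓗.form i y + s * 𝓗.form i z := fun _ ↦
    Convex.combo_affine_apply hrs
  have hzero : ∀ i ∈ A, 𝓗.form i (r • y + s • z) = 0 := fun i hi ↦ by
    rw [hform, (hmem i).1.2 hi, (hmem i).2.2.1.2 hi, mul_zero, mul_zero, add_zero]
  have hpos : ∀ i ∉ insert b A, i ∈ u → 0 < 𝓗.form i (r • y + s • z) := fun i hi hiu ↦ by
    have hyz : 0 < 𝓗.form i y ∧ 0 < 𝓗.form i z := by grind
    exact hform i ▸ add_pos (mul_pos hr hyz.1) (mul_pos hs hyz.2)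
  have hneg : ∀ i ∉ insert b A, i ∉ u → 𝓗.form i (r • y + s • z) < 0 := fun i hi hiu ↦ by
    have hyz : 𝓗.form i y < 0 ∧ 𝓗.form i z < 0 := by grind
    exact hform i ▸ add_neg (mul_neg_of_pos_of_neg hr hyz.1) (mul_neg_of_pos_of_neg hs hyz.2)
  refine ⟨r • y + s • z, ?_, ?_⟩ <;> ext i
  · grind [mem_zeroSet]
  · grind [mem_posSet]

lemma exists_zeroSet_posSet_eq (hu : ∀ t ⊆ A, (𝓗.cell (u ∆ t)).Nonempty) :
    ∃ x, 𝓗.zeroSet x = A ∧ 𝓗.posSet x = u \ A := by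
  induction A using Finset.induction_on generalizing u with
  | empty =>
    obtain ⟨x, hx⟩ := hu ∅ subset_rfl
    rw [symmDiff_empty] at hx
    exact ⟨x, by simpa only [Finset.sdiff_empty] using mem_cell.1 hx⟩
  | insert b A hb ih =>
    obtain ⟨y, hy, hyu⟩ := ih fun t ht ↦ hu t (ht.trans (Finset.subset_insert b A))
    obtain ⟨z, hz, hzu⟩ := ih (u := u ∆ {b}) fun t ht ↦ by
      have hinsert : u ∆ {b} ∆ t = u ∆ insert b t := by grind [Finset.mem_symmDiff]
      exact hinsert ▸ hu _ (Finset.insert_subset_insert b ht)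
    exact exists_zeroSet_posSet_eq_insert hb hy hyu hz hzu

lemma GeneralPosition.exists_mem_stratum (hgp : 𝓗.GeneralPosition) (hS : S ⊆ 𝓗.chambers)
    (hu : u ∈ cubes (𝓗.signFamily S) A) : ∃ x ∈ 𝓗.stratum S A, 𝓗.posSet x = u \ A := by
  obtain ⟨x, rfl, hxu⟩ := 𝓗.exists_zeroSet_posSet_eq fun t ht ↦
    mem_signFamily_chambers.1 (signFamily_mono hS (mem_cubes.1 hu t ht))
  refine ⟨x, (hgp.mem_stratum_iff hS).2 ⟨?_, subset_rfl⟩, hxu⟩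
  rw [hxu, ← symmDiff_inter_eq_sdiff]
  exact symmDiff_mem_cubes hu Finset.inter_subset_right

lemma StrataConnected.hasConnectedCubes (hsc : 𝓗.StrataConnected S) (hgp : 𝓗.GeneralPosition)
    (hS : S ⊆ 𝓗.chambers) : HasConnectedCubes (𝓗.signFamily S) := by
  intro A
  have hstratum : ∀ u ∈ cubes (𝓗.signFamily S) A, ∃ x ∈ 𝓗.stratum S A,
      (cubeGraph (cubes (𝓗.signFamily S) A)).Reachable u (𝓗.posSet x) := by
    intro u hu
    obtain ⟨x, hx, hxu⟩ := hgp.exists_mem_stratum hS hu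
    refine ⟨x, hx, ?_⟩
    rw [hxu, ← symmDiff_inter_eq_sdiff]
    exact reachable_symmDiff_of_mem_cubes hu Finset.inter_subset_right
  intro u hu v hv
  obtain ⟨x, hx, hux⟩ := hstratum u hu
  obtain ⟨y, hy, hvy⟩ := hstratum v hv
  refine (hux.trans ?_).trans hvy.symm
  refine (hsc A ⟨x, hx⟩).isPreconnected.induction₂
    (fun a b ↦ (cubeGraph (cubes (𝓗.signFamily S) A)).Reachable (𝓗.posSet a) (𝓗.posSet b))
    (fun a ha ↦ ?_) (fun _ _ _ _ _ _ hab hbc ↦ hab.trans hbc) (fun _ _ _ _ h ↦ h.symm) hx hy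
  filter_upwards [mem_nhdsWithin_of_mem_nhds (𝓗.eventually_zeroSet_posSet a)] with b ⟨_, hab⟩
  obtain ⟨haS, haA⟩ := (hgp.mem_stratum_iff hS).1 ha
  simpa only [symmDiff_symmDiff_cancel_left] using
    (reachable_symmDiff_of_mem_cubes haS hab).mono (cubeGraph_mono (cubes_anti haA))

end SignFamily

section Bounds

/-- The members of `signFamily S` coming from the chambers in `S` that have a facet in the `f`-th
hyperplane. -/
def facetFamily (𝓗 : Arrangement d n) (S : Set (Set (Fin d → ℝ))) (f : Fin n) :
    Finset (Finset (Fin n)) :=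
  {u ∈ 𝓗.signFamily S | u ∆ {f} ∈ 𝓗.signFamily 𝓗.chambers}

lemma mem_facetFamily :
    u ∈ 𝓗.facetFamily S f ↔ 𝓗.cell u ∈ S ∧ (𝓗.cell (u ∆ {f})).Nonempty := by
  rw [facetFamily, Finset.mem_filter, mem_signFamily, mem_signFamily_chambers]

lemma cubes_singleton_subset_facetFamily (hS : S ⊆ 𝓗.chambers) :
    cubes (𝓗.signFamily S) {f} ⊆ 𝓗.facetFamily S f := fun _ hu ↦
  Finset.mem_filter.2 ((mem_cubes_singleton.1 hu).imp_right fun h ↦ signFamily_mono hS h)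

protected lemma Bounds.mem_strongShatterer (hb : 𝓗.Bounds f S A) (hgp : 𝓗.GeneralPosition)
    (hS : S ⊆ 𝓗.chambers) : A ∈ strongShatterer (𝓗.facetFamily S f) := by
  obtain ⟨x, ⟨hxf, hxcl⟩, hxA⟩ := hb.2
  obtain ⟨y, hy, -, hxy⟩ := ((mem_closure_iff_frequently.1 hxcl).and_eventually
    (𝓗.eventually_zeroSet_posSet x)).exists
  obtain ⟨hyS, hyA⟩ := (hgp.mem_stratum_iff hS).1 hy
  refine mem_strongShatterer.2 ⟨𝓗.posSet y, mem_cubes.2 fun t ht ↦ mem_facetFamily.2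
    ⟨mem_signFamily.1 (mem_cubes.1 hyS t (ht.trans hyA)), ?_⟩⟩
  have hft : 𝓗.posSet x ∆ 𝓗.posSet y ∆ t ∆ {f} ⊆ 𝓗.zeroSet x := by
    have hf : f ∈ 𝓗.zeroSet x := mem_zeroSet.2 (mem_H_iff.1 hxf)
    have hA : A ⊆ 𝓗.zeroSet x := fun i hi ↦ mem_zeroSet.2 (mem_H_iff.1 (mem_iInter₂.1 hxA i hi))
    grind [Finset.mem_symmDiff]
  have hcell := closure_nonempty_iff.1 ⟨x, hgp.mem_closure_cell hft⟩
  rwa [symmDiff_assoc, symmDiff_assoc, symmDiff_symmDiff_cancel_left, ← symmDiff_assoc] at hcell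

lemma Bounds.notMem_strongShatterer (hb : 𝓗.Bounds f S A) (hgp : 𝓗.GeneralPosition)
    (hS : S ⊆ 𝓗.chambers) : A ∉ strongShatterer (cubes (𝓗.signFamily S) {f}) := by
  intro hA
  obtain ⟨u, hu⟩ := mem_strongShatterer.1 hA
  rw [cubes_cubes] at hu
  obtain ⟨x, hx, -⟩ := hgp.exists_mem_stratum hS hu
  obtain ⟨hxS, hxA⟩ := (hgp.mem_stratum_iff hS).1 hx
  have hxf : 𝓗.form f x = 0 := mem_zeroSet.1 (hxA (Finset.mem_union_left A (by simp)))
  have hxA := (hgp.mem_stratum_iff hS).2 ⟨hxS, Finset.union_subset_right hxA⟩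
  obtain hpos | hneg := hb.1
  · exact (mem_pos_iff.1 (hpos hxA)).ne' hxf
  · exact (mem_neg_iff.1 (hneg hxA)).ne hxf

open Classical in
theorem StrataConnected.card_bounds_le (hsc : 𝓗.StrataConnected S) (hgp : 𝓗.GeneralPosition)
    (hS : S ⊆ 𝓗.chambers) (f : Fin n) :
    ({A | 𝓗.Bounds f S A} : Finset (Finset (Fin n))).card ≤
      (𝓗.facetFamily S f \ cubes (𝓗.signFamily S) {f}).card := by
  refine le_trans (Finset.card_le_card fun A hA ↦ ?_)
    (((hsc.hasConnectedCubes hgp hS).cubes {f}).card_strongShatterer_sdiff_le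
      (cubes_singleton_subset_facetFamily hS))
  have hb : 𝓗.Bounds f S A := (Finset.mem_filter.1 hA).2
  exact Finset.mem_sdiff.2 ⟨hb.mem_strongShatterer hgp hS, hb.notMem_strongShatterer hgp hS⟩

end Bounds

section EdgeBoundary

lemma cell_subset_pos_iff (hu : (𝓗.cell u).Nonempty) : 𝓗.cell u ⊆ 𝓗.pos f ↔ f ∈ u := by
  obtain ⟨x, hx⟩ := hu
  refine ⟨fun h ↦ ?_, fun hf y hy ↦ ?_⟩
  · rw [← (mem_cell.1 hx).2]
    exact mem_posSet.2 (mem_pos_iff.1 (h hx))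
  · rw [← (mem_cell.1 hy).2] at hf
    exact mem_pos_iff.2 (mem_posSet.1 hf)

lemma cell_subset_neg_iff (hu : (𝓗.cell u).Nonempty) : 𝓗.cell u ⊆ 𝓗.neg f ↔ f ∉ u := by
  have hneg : ∀ x ∈ 𝓗.cell u, (x ∈ 𝓗.neg f ↔ f ∉ u) := by
    intro x hx
    obtain ⟨hx0, rfl⟩ := mem_cell.1 hx
    have hxf : 𝓗.form f x ≠ 0 := fun h ↦ Finset.notMem_empty f (hx0 ▸ mem_zeroSet.2 h)
    rw [mem_neg_iff, mem_posSet, not_lt, hxf.le_iff_lt]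
  obtain ⟨x, hx⟩ := hu
  exact ⟨fun h ↦ (hneg x hx).1 (h hx), fun hf y hy ↦ (hneg y hy).2 hf⟩

lemma separates_cell_iff (hu : (𝓗.cell u).Nonempty) (hv : (𝓗.cell v).Nonempty) :
    𝓗.Separates f (𝓗.cell u) (𝓗.cell v) ↔ f ∈ u ∆ v := by
  rw [Separates, cell_subset_pos_iff hu, cell_subset_pos_iff hv, cell_subset_neg_iff hu,
    cell_subset_neg_iff hv, Finset.mem_symmDiff, and_comm (a := f ∉ u)]

lemma adj_cell_symmDiff_singleton (hu : (𝓗.cell u).Nonempty) (hv : (𝓗.cell (u ∆ {f})).Nonempty) :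
    𝓗.Adj (𝓗.cell u) (𝓗.cell (u ∆ {f})) := by
  refine ⟨mem_chambers_iff.2 ⟨u, hu, rfl⟩, mem_chambers_iff.2 ⟨_, hv, rfl⟩, f, ?_⟩
  simp [separates_cell_iff hu hv]

lemma finite_chambers : 𝓗.chambers.Finite :=
  (finite_range 𝓗.cell).subset fun _ hC ↦ by
    obtain ⟨u, -, rfl⟩ := mem_chambers_iff.1 hC
    exact mem_range_self u

lemma finite_edgeBoundary : (𝓗.edgeBoundary S).Finite :=
  (finite_chambers.prod finite_chambers).subset fun _ ⟨_, _, h₁, h₂, _⟩ ↦ ⟨h₁, h₂⟩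

theorem sum_card_facetFamily_sdiff_le (hS : S ⊆ 𝓗.chambers) :
    ∑ f, (𝓗.facetFamily S f \ cubes (𝓗.signFamily S) {f}).card ≤ (𝓗.edgeBoundary S).ncard := by
  rw [← Finset.card_sigma, ← Set.ncard_coe_finset]
  have hmem : ∀ p ∈ Finset.univ.sigma fun f ↦ 𝓗.facetFamily S f \ cubes (𝓗.signFamily S) {f},
      𝓗.cell p.2 ∈ S ∧ (𝓗.cell p.2).Nonempty ∧ (𝓗.cell (p.2 ∆ {p.1})).Nonempty ∧
        𝓗.cell (p.2 ∆ {p.1}) ∉ S := by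
    intro p hp
    obtain ⟨hfacet, hcube⟩ := Finset.mem_sdiff.1 (Finset.mem_sigma.1 hp).2
    obtain ⟨hu, hv⟩ := mem_facetFamily.1 hfacet
    refine ⟨hu, mem_signFamily_chambers.1 (mem_signFamily.2 (hS hu)), hv, fun hvS ↦ hcube ?_⟩
    exact mem_cubes_singleton.2 ⟨mem_signFamily.2 hu, mem_signFamily.2 hvS⟩
  refine Set.ncard_le_ncard_of_injOn (fun p ↦ (𝓗.cell p.2, 𝓗.cell (p.2 ∆ {p.1}))) ?_ ?_
    finite_edgeBoundary
  · intro p hp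
    obtain ⟨hS, hu, hv, hS'⟩ := hmem p hp
    exact ⟨hS, hS', adj_cell_symmDiff_singleton hu hv⟩
  · rintro ⟨f, u⟩ hu ⟨f', u'⟩ hu' heq
    obtain ⟨-, hu, hv, -⟩ := hmem _ hu
    obtain ⟨h₁, h₂⟩ := Prod.ext_iff.1 heq
    obtain rfl : u = u' := eq_of_cell_eq hu h₁
    obtain rfl : f = f' := by simpa using eq_of_cell_eq hv h₂
    rfl

end EdgeBoundary

end Arrangement

/-- If `S` is a strata-connected subset of the chambers of an
arrangement in general position in `ℝ^d`, then `|∂S| ≥ ∑_{A ∈ supp S} |b(A)|`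
(the summand vanishes for `A ∉ supp S`, since then the stratum is empty). -/
theorem stmt5 {d n : ℕ} (𝓗 : Arrangement d n) (hgp : 𝓗.GeneralPosition)
    (S : Set (Set (Fin d → ℝ))) (hS : S ⊆ 𝓗.chambers)
    (hsc : 𝓗.StrataConnected S) :
    ∑ A : Finset (Fin n), {f : Fin n | 𝓗.Bounds f S A}.ncard ≤
      (𝓗.edgeBoundary S).ncard := by
  classical
  calc ∑ A : Finset (Fin n), {f : Fin n | 𝓗.Bounds f S A}.ncard
      = ∑ A : Finset (Fin n), ({f | 𝓗.Bounds f S A} : Finset (Fin n)).card :=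
        Finset.sum_congr rfl fun A _ ↦ by rw [← Set.ncard_coe_finset, Finset.coe_filter_univ]
    _ = ∑ f, ({A | 𝓗.Bounds f S A} : Finset (Finset (Fin n))).card :=
        Finset.sum_card_bipartiteAbove_eq_sum_card_bipartiteBelow _
    _ ≤ ∑ f, (𝓗.facetFamily S f \ cubes (𝓗.signFamily S) {f}).card :=
        Finset.sum_le_sum fun f _ ↦ hsc.card_bounds_le hgp hS f
    _ ≤ (𝓗.edgeBoundary S).ncard := 𝓗.sum_card_facetFamily_sdiff_le hS
end
end
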